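/- For every N ∈ ℕ, every f ∈ E_N and all multi-indices α, β ∈ ℕ^n, one has ‖x^α ∂_x^β f‖_{L²(ℝ^n)} ≤ 2^{(|α|+|β|)/2} √( (N+|α|+|β|)! / N! ) ‖f‖_{L²(ℝ^n)}. -/

import Mathlib

open MeasureTheory
open scoped BigOperators ENNReal NNReal

noncomputable section

abbrev En (n : ℕ) := EuclideanSpace ℝ (Fin n)

/-- One-dimensional Hermite function. -/
def hermite1 (k : ℕ) (x : ℝ) : ℝ :=
  (-1 : ℝ) ^ k * ((2 ^ k * (k.factorial : ℝ) * Real.sqrt Real.pi) ^ (-(1/2 : ℝ))) *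
    Real.exp (x ^ 2 / 2) * iteratedDeriv k (fun y => Real.exp (-y ^ 2)) x

/-- Tensorized Hermite function on ℝⁿ. -/
def hermiteFun (n : ℕ) (α : Fin n → ℕ) (x : En n) : ℂ :=
  ∏ j, (hermite1 (α j) (x j) : ℂ)

/-- The span E_N of Hermite functions with |α| ≤ N. -/
def hermiteSpan (n N : ℕ) : Submodule ℂ (En n → ℂ) :=
  Submodule.span ℂ {g | ∃ α : Fin n → ℕ, (∑ j, α j) ≤ N ∧ g = hermiteFun n α}

/-- Partial derivative in direction j. -/
def pderiv1 {n : ℕ} (j : Fin n) (f : En n → ℂ) : En n → ℂ :=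
  fun x => fderiv ℝ f x (EuclideanSpace.single j (1 : ℝ))

/-- Multi-index partial derivative ∂^β. -/
def pderivMulti {n : ℕ} (β : Fin n → ℕ) (f : En n → ℂ) : En n → ℂ :=
  (List.finRange n).foldr (fun j g => (pderiv1 j)^[β j] g) f

/-- Monomial x^α. -/
def monomial (n : ℕ) (α : Fin n → ℕ) (x : En n) : ℝ := ∏ j, (x j) ^ (α j)

/-- L² norm on ℝⁿ. -/
def L2norm (n : ℕ) (f : En n → ℂ) : ℝ := Real.sqrt (∫ x, ‖f x‖ ^ 2)

/-- Japanese bracket ⟨x⟩. -/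
def jap (n : ℕ) (x : En n) : ℝ := Real.sqrt (1 + ‖x‖ ^ 2)

/-! ### One-dimensional theory -/

def gaussD (k : ℕ) : ℝ → ℝ := iteratedDeriv k (fun y => Real.exp (-y ^ 2))

lemma gaussD_hasDerivAt (k : ℕ) (x : ℝ) : HasDerivAt (gaussD k) (gaussD (k+1) x) x := by
  have h : ContDiff ℝ (⊤ : ℕ∞) (fun y : ℝ => Real.exp (-y ^ 2)) := by fun_prop
  have h2 : Differentiable ℝ (gaussD k) :=
    h.differentiable_iteratedDeriv k (by exact_mod_cast WithTop.coe_lt_top k)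
  have := (h2 x).hasDerivAt
  have e : gaussD (k+1) = deriv (gaussD k) := iteratedDeriv_succ
  rw [e]
  exact this

lemma gaussD_zero (x : ℝ) : gaussD 0 x = Real.exp (-x^2) := by simp [gaussD]

lemma gaussD_rec (k : ℕ) (x : ℝ) :
    gaussD (k+1) x = -2 * x * gaussD k x - 2 * k * gaussD (k-1) x := by
  induction k generalizing x with
  | zero =>
    have h := gaussD_hasDerivAt 0 x
    have h2 : HasDerivAt (gaussD 0) (Real.exp (-x^2) * (-(2 * x))) x := by
      have e : gaussD 0 = fun x => Real.exp (-x^2) := funext gaussD_zero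
      rw [e]
      have := ((hasDerivAt_pow 2 x).neg).exp
      simpa using this
    rw [h.unique h2, gaussD_zero]; simp; ring
  | succ k ih =>
    have h := gaussD_hasDerivAt (k+1) x
    have h2 : HasDerivAt (gaussD (k+1)) (-2 * gaussD k x + -2 * x * gaussD (k+1) x
        - 2 * k * gaussD k x) x := by
      have e : gaussD (k+1) = fun x => -2 * x * gaussD k x - 2 * k * gaussD (k-1) x := funext ih
      rw [e]
      have a := ((hasDerivAt_id x).const_mul (-2)).mul (gaussD_hasDerivAt k x)
      have b : HasDerivAt (fun x => 2 * (k:ℝ) * gaussD (k-1) x) (2 * k * gaussD k x) x := by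
        rcases k with _ | k
        · simpa using hasDerivAt_const x (0:ℝ)
        · exact (gaussD_hasDerivAt k x).const_mul _
      have := a.sub b
      refine this.congr_deriv ?_
      simp only [id]
      rw [ih x]
      ring
    rw [h.unique h2]; push_cast; simp; ring

lemma gaussD_poly (k : ℕ) : ∃ P : Polynomial ℝ, ∀ x, gaussD k x = P.eval x * Real.exp (-x^2) := by
  induction k using Nat.strong_induction_on with
  | _ k ih =>
    rcases k with _ | k
    · exact ⟨1, fun x => by simp [gaussD_zero]⟩
    · obtain ⟨P, hP⟩ := ih k (by omega)
      obtain ⟨Q, hQ⟩ := ih (k-1) (by omega)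
      refine ⟨-2 * Polynomial.X * P - Polynomial.C (2 * (k:ℝ)) * Q, fun x => ?_⟩
      rw [gaussD_rec, hP, hQ]
      simp only [Polynomial.eval_sub, Polynomial.eval_mul, Polynomial.eval_C, Polynomial.eval_X,
        Polynomial.eval_neg, Polynomial.eval_ofNat]
      ring

lemma integrable_poly_gauss (P : Polynomial ℝ) :
    Integrable (fun x : ℝ => P.eval x * Real.exp (-x^2)) := by
  induction P using Polynomial.induction_on' with
  | add p q hp hq =>
    simp only [Polynomial.eval_add, add_mul]
    exact hp.add hq
  | monomial n a =>
    have := (integrable_rpow_mul_exp_neg_mul_sq (b := 1) one_pos (s := n)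
      (by have : (0:ℝ) ≤ n := by positivity
          linarith)).const_mul a
    simpa [mul_assoc] using this

def nrm (k : ℕ) : ℝ := (2 ^ k * (k.factorial : ℝ) * Real.sqrt Real.pi) ^ (-(1/2 : ℝ))

lemma nrm_succ (k : ℕ) : nrm k = Real.sqrt (2 * (k + 1)) * nrm (k+1) := by
  unfold nrm
  have hM : 0 ≤ 2 ^ k * (k.factorial : ℝ) * Real.sqrt Real.pi := by positivity
  have e : (2:ℝ) ^ (k+1) * ((k+1).factorial : ℝ) * Real.sqrt Real.pi
    = (2 * (k+1)) * (2 ^ k * (k.factorial : ℝ) * Real.sqrt Real.pi) := by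
    rw [Nat.factorial_succ]; push_cast; ring
  rw [e]
  generalize 2 ^ k * (k.factorial : ℝ) * Real.sqrt Real.pi = M at *
  rw [Real.mul_rpow (by positivity) hM, ← mul_assoc, Real.sqrt_eq_rpow,
    ← Real.rpow_add (by positivity)]
  norm_num

lemma hermite1_eq (k : ℕ) (x : ℝ) :
    hermite1 k x = (-1) ^ k * nrm k * Real.exp (x^2/2) * gaussD k x := rfl

lemma hermite1_hasDerivAt' (k : ℕ) (x : ℝ) :
    HasDerivAt (hermite1 k) (x * hermite1 k x - Real.sqrt (2 * (k + 1)) * hermite1 (k+1) x) x := by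
  have e : hermite1 k = fun x => (-1) ^ k * nrm k * (Real.exp (x^2/2) * gaussD k x) := by
    funext x; rw [hermite1_eq]; ring
  have h1 : HasDerivAt (fun x : ℝ => Real.exp (x^2/2)) (Real.exp (x^2/2) * x) x := by
    have := ((hasDerivAt_pow 2 x).div_const 2).exp
    simpa using this
  have := (h1.mul (gaussD_hasDerivAt k x)).const_mul ((-1) ^ k * nrm k)
  have e2 : x * hermite1 k x - Real.sqrt (2 * (k + 1)) * hermite1 (k+1) x
    = (-1) ^ k * nrm k * (Real.exp (x^2/2) * x * gaussD k x
        + Real.exp (x^2/2) * gaussD (k+1) x) := by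
    rw [hermite1_eq, hermite1_eq, nrm_succ k]; ring
  rw [e2, e]
  exact this

lemma hermite1_rec (k : ℕ) (x : ℝ) :
    x * hermite1 k x = (Real.sqrt (2 * (k + 1)) * hermite1 (k+1) x
      + Real.sqrt (2 * k) * hermite1 (k-1) x) / 2 := by
  have h1 : Real.sqrt (2 * (k + 1)) * hermite1 (k+1) x
      = -(-1) ^ k * nrm k * Real.exp (x^2/2) * gaussD (k+1) x := by
    rw [hermite1_eq, nrm_succ k]; ring
  have h2 : Real.sqrt (2 * k) * hermite1 (k-1) x
      = - (-1) ^ k * nrm k * Real.exp (x^2/2) * (2 * k * gaussD (k-1) x) := by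
    rcases k with _ | k
    · simp
    · rw [hermite1_eq]
      simp only [Nat.add_sub_cancel]
      rw [nrm_succ k]
      push_cast
      have : Real.sqrt (2 * ((k:ℝ) + 1)) * Real.sqrt (2 * ((k:ℝ) + 1)) = 2 * (k+1) :=
        Real.mul_self_sqrt (by positivity)
      linear_combination ((-1) ^ k * nrm (k+1) * Real.exp (x^2/2) * gaussD k x) * this
  rw [h1, h2, gaussD_rec, hermite1_eq]; ring

lemma hermite1_hasDerivAt (k : ℕ) (x : ℝ) :
    HasDerivAt (hermite1 k) ((Real.sqrt (2 * k) * hermite1 (k-1) x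
      - Real.sqrt (2 * (k + 1)) * hermite1 (k+1) x) / 2) x := by
  convert hermite1_hasDerivAt' k x using 1
  rw [hermite1_rec]; ring

lemma hermite1_integrable (k l : ℕ) : Integrable (fun x => hermite1 k x * hermite1 l x) := by
  obtain ⟨P, hP⟩ := gaussD_poly k
  obtain ⟨Q, hQ⟩ := gaussD_poly l
  have := (integrable_poly_gauss (P * Q)).const_mul ((-1) ^ k * nrm k * ((-1)^l * nrm l))
  refine this.congr (Filter.Eventually.of_forall fun x => ?_)
  simp only [hermite1_eq, hP, hQ, Polynomial.eval_mul]
  have e : Real.exp (x^2/2) * Real.exp (x^2/2) * Real.exp (-x^2) = 1 := by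
    rw [← Real.exp_add, ← Real.exp_add]; simp
  linear_combination (-(-1) ^ k * nrm k * ((-1)^l * nrm l) * P.eval x * Q.eval x
    * Real.exp (-x^2)) * e

lemma hermite1_ip_rec (k l : ℕ) :
    Real.sqrt (2 * (k+1)) * ∫ x, hermite1 (k+1) x * hermite1 l x
      = Real.sqrt (2 * l) * ∫ x, hermite1 k x * hermite1 (l-1) x := by
  have hi1 := (hermite1_integrable k (l-1)).const_mul (Real.sqrt (2 * l))
  have hi2 := (hermite1_integrable (k+1) l).const_mul (Real.sqrt (2 * (k+1)))
  have := integral_eq_zero_of_hasDerivAt_of_integrable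
    (f := fun x => hermite1 k x * hermite1 l x)
    (f' := fun x => Real.sqrt (2 * l) * (hermite1 k x * hermite1 (l-1) x)
        - Real.sqrt (2 * (k+1)) * (hermite1 (k+1) x * hermite1 l x)) (fun x => by
      have a := (hermite1_hasDerivAt' k x).mul (hermite1_hasDerivAt l x)
      refine a.congr_deriv ?_
      have r := hermite1_rec l x
      linear_combination (hermite1 k x) * r) (hi1.sub hi2) (hermite1_integrable k l)
  rw [integral_sub hi1 hi2, integral_const_mul, integral_const_mul] at this
  linarith

lemma hermite1_ip_zero : ∫ x, hermite1 0 x * hermite1 0 x = 1 := by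
  have e : ∀ x, hermite1 0 x * hermite1 0 x = nrm 0 * nrm 0 * Real.exp (-1 * x^2) := by
    intro x
    simp only [hermite1_eq, gaussD_zero]
    have e : Real.exp (x^2/2) * Real.exp (x^2/2) * Real.exp (-x^2) = 1 := by
      rw [← Real.exp_add, ← Real.exp_add]; simp
    rw [neg_one_mul]
    linear_combination (nrm 0 * nrm 0 * Real.exp (-x^2)) * e
  simp_rw [e]
  rw [integral_const_mul, integral_gaussian]
  unfold nrm
  have hp : 0 < Real.sqrt Real.pi := Real.sqrt_pos.2 Real.pi_pos
  rw [← Real.rpow_add (by positivity)]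
  norm_num
  rw [Real.rpow_neg_one]
  field_simp

lemma hermite1_ip (k l : ℕ) : ∫ x, hermite1 k x * hermite1 l x = if k = l then 1 else 0 := by
  induction k generalizing l with
  | zero =>
    rcases l with _ | l
    · simpa using hermite1_ip_zero
    · have := hermite1_ip_rec l 0
      have h2 : Real.sqrt (2 * ((l:ℝ)+1)) ≠ 0 := by positivity
      simp at this
      rw [if_neg (by omega)]
      simp_rw [mul_comm (hermite1 0 _)]
      rcases this with h | h
      · exact absurd h (by positivity)
      · exact h
  | succ k ih =>
    have h2 : Real.sqrt (2 * ((k:ℝ)+1)) ≠ 0 := by positivity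
    have := hermite1_ip_rec k l
    apply mul_left_cancel₀ h2
    rw [this]
    rcases l with _ | l
    · simp
    · simp only [Nat.add_sub_cancel, ih, Nat.add_right_cancel_iff]
      by_cases h : k = l
      · simp [h]
      · simp [h]

/-! ### The tensorized functions -/

lemma hermiteFun_integrable {n : ℕ} (α β : Fin n → ℕ) :
    Integrable (fun x => hermiteFun n α x * hermiteFun n β x) := by
  have h : Integrable (fun x : Fin n → ℝ =>
      ∏ j, ((hermite1 (α j) (x j) * hermite1 (β j) (x j) : ℝ) : ℂ)) :=
    Integrable.fintype_prod (f := fun j (t : ℝ) => ((hermite1 (α j) t * hermite1 (β j) t : ℝ) : ℂ))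
      (fun j => (hermite1_integrable _ _).ofReal)
  rw [← (PiLp.volume_preserving_toLp (Fin n)).integrable_comp_emb
    (MeasurableEquiv.toLp 2 _).measurableEmbedding]
  refine h.congr (Filter.Eventually.of_forall fun x => ?_)
  simp [hermiteFun, Finset.prod_mul_distrib]

lemma hermiteFun_ip {n : ℕ} (α β : Fin n → ℕ) :
    ∫ x, hermiteFun n α x * hermiteFun n β x = if α = β then 1 else 0 := by
  rw [← (PiLp.volume_preserving_toLp (Fin n)).integral_comp
    (MeasurableEquiv.toLp 2 _).measurableEmbedding]
  have e : ∀ x : Fin n → ℝ, hermiteFun n α (WithLp.toLp 2 x) * hermiteFun n β (WithLp.toLp 2 x)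
     = ∏ j, ((hermite1 (α j) (x j) * hermite1 (β j) (x j) : ℝ) : ℂ) := by
    intro x; simp [hermiteFun, Finset.prod_mul_distrib]
  simp_rw [e]
  rw [integral_fintype_prod_volume_eq_prod
    (fun j (t : ℝ) => ((hermite1 (α j) t * hermite1 (β j) t : ℝ) : ℂ))]
  simp_rw [integral_complex_ofReal, hermite1_ip]
  split_ifs with h
  · subst h; simp
  · obtain ⟨j, hj⟩ := Function.ne_iff.1 h
    exact Finset.prod_eq_zero (Finset.mem_univ j) (by simp [hj])

lemma conj_hermiteFun {n : ℕ} (α : Fin n → ℕ) (x : En n) :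
    (starRingEnd ℂ) (hermiteFun n α x) = hermiteFun n α x := by
  simp [hermiteFun, map_prod]

lemma normSq_comb {n : ℕ} (s : Finset (Fin n → ℕ)) (c : (Fin n → ℕ) → ℂ)
    (σ : (Fin n → ℕ) → (Fin n → ℕ))
    (hσ : ∀ α, ∀ β, c α ≠ 0 → c β ≠ 0 → σ α = σ β → α = β) :
    Integrable (fun x => ‖∑ α ∈ s, c α * hermiteFun n (σ α) x‖ ^ 2) ∧
    ∫ x, ‖∑ α ∈ s, c α * hermiteFun n (σ α) x‖ ^ 2 = ∑ α ∈ s, ‖c α‖ ^ 2 := by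
  have e : ∀ x, ((‖∑ α ∈ s, c α * hermiteFun n (σ α) x‖ ^ 2 : ℝ) : ℂ)
      = ∑ α ∈ s, ∑ β ∈ s, (c α * (starRingEnd ℂ) (c β)) *
        (hermiteFun n (σ α) x * hermiteFun n (σ β) x) := by
    intro x
    push_cast
    rw [← Complex.mul_conj', map_sum, Finset.sum_mul_sum]
    refine Finset.sum_congr rfl fun α _ => Finset.sum_congr rfl fun β _ => ?_
    rw [map_mul, conj_hermiteFun]; ring
  have hi : ∀ α ∈ s, ∀ β ∈ s, Integrable (fun x => (c α * (starRingEnd ℂ) (c β)) *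
        (hermiteFun n (σ α) x * hermiteFun n (σ β) x)) := fun α _ β _ =>
    (hermiteFun_integrable _ _).const_mul _
  have hI : Integrable (fun x => ((‖∑ α ∈ s, c α * hermiteFun n (σ α) x‖ ^ 2 : ℝ) : ℂ)) := by
    simp_rw [e]
    exact integrable_finsetSum _ fun α ha => integrable_finsetSum _ fun β hb => hi α ha β hb
  constructor
  · have := hI.re
    simpa only [RCLike.re_to_complex, Complex.ofReal_re] using this
  · apply Complex.ofReal_injective
    rw [← integral_complex_ofReal]
    simp_rw [e]
    rw [integral_finsetSum _ fun α ha => integrable_finsetSum _ fun β hb => hi α ha β hb]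
    push_cast
    refine Finset.sum_congr rfl fun α ha => ?_
    rw [integral_finsetSum _ fun β hb => hi α ha β hb]
    simp_rw [integral_const_mul, hermiteFun_ip]
    rw [Finset.sum_eq_single_of_mem α ha]
    · simp [Complex.mul_conj']
    · intro β _ hne
      by_cases h1 : c α = 0
      · simp [h1]
      by_cases h2 : c β = 0
      · simp [h2]
      rw [if_neg fun h => hne (hσ α β h1 h2 h).symm, mul_zero]

lemma hermiteFun_update {n : ℕ} (α : Fin n → ℕ) (j : Fin n) (m : ℕ) (x : En n) :
    hermiteFun n (Function.update α j m) x
      = (hermite1 m (x j) : ℂ) * ∏ i ∈ Finset.univ.erase j, (hermite1 (α i) (x i) : ℂ) := by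
  rw [hermiteFun, ← Finset.mul_prod_erase _ _ (Finset.mem_univ j)]
  congr 1
  · simp
  · refine Finset.prod_congr rfl fun i hi => ?_
    rw [Function.update_of_ne (Finset.ne_of_mem_erase hi)]

lemma hermiteFun_split {n : ℕ} (α : Fin n → ℕ) (j : Fin n) (x : En n) :
    hermiteFun n α x
      = (hermite1 (α j) (x j) : ℂ) * ∏ i ∈ Finset.univ.erase j, (hermite1 (α i) (x i) : ℂ) := by
  rw [hermiteFun, ← Finset.mul_prod_erase _ _ (Finset.mem_univ j)]

def upI {n : ℕ} (j : Fin n) (α : Fin n → ℕ) : Fin n → ℕ := Function.update α j (α j + 1)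
def dnI {n : ℕ} (j : Fin n) (α : Fin n → ℕ) : Fin n → ℕ := Function.update α j (α j - 1)
def cu {n : ℕ} (j : Fin n) (α : Fin n → ℕ) : ℝ := Real.sqrt (2 * (α j + 1))
def cd {n : ℕ} (j : Fin n) (α : Fin n → ℕ) : ℝ := Real.sqrt (2 * α j)

lemma mul_hermiteFun {n : ℕ} (j : Fin n) (α : Fin n → ℕ) (x : En n) :
    (x j : ℂ) * hermiteFun n α x
      = (cu j α * hermiteFun n (upI j α) x + cd j α * hermiteFun n (dnI j α) x) / 2 := by
  rw [upI, dnI, hermiteFun_update, hermiteFun_update, hermiteFun_split α j, ← mul_assoc,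
    ← Complex.ofReal_mul, hermite1_rec, cu, cd]
  push_cast
  ring

lemma hermiteFun_differentiable {n : ℕ} (α : Fin n → ℕ) :
    Differentiable ℝ (hermiteFun n α) := by
  have h : ∀ k, Differentiable ℝ (hermite1 k) := fun k x =>
    (hermite1_hasDerivAt k x).differentiableAt
  have h2 : ∀ j : Fin n, Differentiable ℝ (fun x : En n => (hermite1 (α j) (x j) : ℂ)) := by
    intro j
    have a : Differentiable ℝ (fun x : En n => hermite1 (α j) (x j)) :=
      (h (α j)).comp (EuclideanSpace.proj (𝕜 := ℝ) j).differentiable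
    exact Complex.ofRealCLM.differentiable.comp a
  unfold hermiteFun
  intro x
  have := (HasFDerivAt.finsetProd (u := Finset.univ)
    (fun j _ => (h2 j x).hasFDerivAt)).differentiableAt
  convert this using 1

lemma pderiv1_hermiteFun {n : ℕ} (j : Fin n) (α : Fin n → ℕ) (x : En n) :
    pderiv1 j (hermiteFun n α) x
      = (cd j α * hermiteFun n (dnI j α) x - cu j α * hermiteFun n (upI j α) x) / 2 := by
  rw [pderiv1, ← (hermiteFun_differentiable α x).lineDeriv_eq_fderiv, lineDeriv]
  have e : ∀ t : ℝ, hermiteFun n α (x + t • EuclideanSpace.single j (1:ℝ))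
      = (hermite1 (α j) (x j + t) : ℂ)
        * ∏ i ∈ Finset.univ.erase j, (hermite1 (α i) (x i) : ℂ) := by
    intro t
    rw [hermiteFun_split α j]
    congr 1
    · simp
    · refine Finset.prod_congr rfl fun i hi => ?_
      simp [Finset.ne_of_mem_erase hi]
  simp_rw [e]
  have h := hermite1_hasDerivAt (α j) (x j + 0)
  have h1 := (h.comp_const_add (x j) 0).ofReal_comp.mul_const
    (∏ i ∈ Finset.univ.erase j, (hermite1 (α i) (x i) : ℂ))
  rw [h1.deriv, upI, dnI, hermiteFun_update, hermiteFun_update, cu, cd]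
  push_cast
  simp only [add_zero]
  ring

/-! ### One step estimates -/

def idxS (n N : ℕ) : Finset (Fin n → ℕ) :=
  (Fintype.piFinset fun _ => Finset.range (N+1)).filter fun α => ∑ j, α j ≤ N

lemma mem_idxS {n N : ℕ} (α : Fin n → ℕ) : α ∈ idxS n N ↔ ∑ j, α j ≤ N := by
  simp only [idxS, Finset.mem_filter, Fintype.mem_piFinset, Finset.mem_range, and_iff_right_iff_imp]
  intro h j
  have := Finset.single_le_sum (f := α) (fun i _ => Nat.zero_le _) (Finset.mem_univ j)
  omega

lemma span_rep {n N : ℕ} {f : En n → ℂ} (hf : f ∈ hermiteSpan n N) :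
    ∃ c : (Fin n → ℕ) → ℂ, f = fun x => ∑ α ∈ idxS n N, c α * hermiteFun n α x := by
  classical
  unfold hermiteSpan at hf
  induction hf using Submodule.span_induction with
  | mem g hg =>
    obtain ⟨α, hα, rfl⟩ := hg
    refine ⟨fun β => if β = α then 1 else 0, ?_⟩
    funext x
    rw [Finset.sum_eq_single_of_mem α ((mem_idxS α).2 hα)]
    · simp
    · intro β _ h; simp [h]
  | zero => exact ⟨0, by funext x; simp⟩
  | add f g _ _ hf hg =>
    obtain ⟨c, rfl⟩ := hf
    obtain ⟨d, rfl⟩ := hg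
    exact ⟨c + d, by funext x; simp [add_mul, Finset.sum_add_distrib]⟩
  | smul a f _ hf =>
    obtain ⟨c, rfl⟩ := hf
    exact ⟨a • c, by funext x; simp [Finset.mul_sum, mul_assoc]⟩

lemma hermiteFun_mem {n N : ℕ} (α : Fin n → ℕ) (h : ∑ j, α j ≤ N) :
    hermiteFun n α ∈ hermiteSpan n N := Submodule.subset_span ⟨α, h, rfl⟩

lemma comb_mem {n N M : ℕ} (c : (Fin n → ℕ) → ℂ) (σ : (Fin n → ℕ) → (Fin n → ℕ))
    (h : ∀ α ∈ idxS n N, ∑ j, σ α j ≤ M) :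
    (fun x => ∑ α ∈ idxS n N, c α * hermiteFun n (σ α) x) ∈ hermiteSpan n M := by
  have e : (fun x => ∑ α ∈ idxS n N, c α * hermiteFun n (σ α) x)
      = ∑ α ∈ idxS n N, c α • hermiteFun n (σ α) := by
    funext x; simp [Finset.sum_apply]
  rw [e]
  exact Submodule.sum_mem _ fun α hα => Submodule.smul_mem _ _ (hermiteFun_mem _ (h α hα))

lemma sum_upI {n : ℕ} (j : Fin n) (α : Fin n → ℕ) : ∑ i, upI j α i = ∑ i, α i + 1 := by
  rw [upI, Finset.sum_update_of_mem (Finset.mem_univ j), Finset.sdiff_singleton_eq_erase,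
    ← Finset.add_sum_erase _ _ (Finset.mem_univ j)]
  omega

lemma sum_dnI {n : ℕ} (j : Fin n) (α : Fin n → ℕ) : ∑ i, dnI j α i ≤ ∑ i, α i := by
  rw [dnI, Finset.sum_update_of_mem (Finset.mem_univ j), Finset.sdiff_singleton_eq_erase,
    ← Finset.add_sum_erase _ _ (Finset.mem_univ j)]
  omega

lemma upI_inj {n : ℕ} (j : Fin n) (α β : Fin n → ℕ) (h : upI j α = upI j β) : α = β := by
  funext i
  have := congrFun h i
  by_cases hi : i = j
  · subst hi; simpa [upI] using this
  · simpa [upI, hi] using this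

lemma dnI_inj {n : ℕ} (j : Fin n) (α β : Fin n → ℕ) (ha : α j ≠ 0) (hb : β j ≠ 0)
    (h : dnI j α = dnI j β) : α = β := by
  funext i
  have := congrFun h i
  by_cases hi : i = j
  · subst hi
    simp [dnI] at this
    omega
  · simpa [dnI, hi] using this

/-- Abstract step. -/
lemma step_aux {n N : ℕ} (j : Fin n) (c : (Fin n → ℕ) → ℂ) (ε : ℂ) (hε : ‖ε‖ = 1) (g : En n → ℂ)
    (hg : ∀ x, g x = ∑ α ∈ idxS n N, c α *
      ((cd j α * hermiteFun n (dnI j α) x + ε * (cu j α * hermiteFun n (upI j α) x)) / 2)) :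
    g ∈ hermiteSpan n (N+1) ∧
    ∫ x, ‖g x‖ ^ 2 ≤
      2 * (N+1) * ∫ x, ‖∑ α ∈ idxS n N, c α * hermiteFun n α x‖ ^ 2 := by
  have e : g = (1/2 : ℂ) • ((fun x => ∑ α ∈ idxS n N, (c α * cd j α) * hermiteFun n (dnI j α) x)
      + ε • fun x => ∑ α ∈ idxS n N, (c α * cu j α) * hermiteFun n (upI j α) x) := by
    funext x
    simp only [hg, Pi.smul_apply, Pi.add_apply, smul_eq_mul, Finset.mul_sum,
      ← Finset.sum_add_distrib]
    refine Finset.sum_congr rfl fun α _ => ?_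
    ring
  have hB := normSq_comb (idxS n N) (fun α => c α * cd j α) (dnI j) (by
    intro α β h1 h2 h
    refine dnI_inj j α β ?_ ?_ h
    · intro h0; simp [cd, h0] at h1
    · intro h0; simp [cd, h0] at h2)
  have hA := normSq_comb (idxS n N) (fun α => c α * cu j α) (upI j)
    (fun α β _ _ h => upI_inj j α β h)
  have hF := normSq_comb (idxS n N) c id (fun α β _ _ h => h)
  simp only [id] at hF
  constructor
  · rw [e]
    refine Submodule.smul_mem _ _ (Submodule.add_mem _ ?_ (Submodule.smul_mem _ _ ?_))
    · exact comb_mem _ _ fun α hα => (sum_dnI j α).trans (((mem_idxS α).1 hα).trans (by omega))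
    · refine comb_mem _ _ fun α hα => ?_
      rw [sum_upI]
      have := (mem_idxS α).1 hα
      omega
  · rw [hF.2]
    have hI := (hB.1.add hA.1).const_mul (1/2)
    have h1 : ∫ x, ‖g x‖ ^ 2 ≤ ∫ x, (1/2) *
       ((fun x => ‖∑ α ∈ idxS n N, (c α * cd j α) * hermiteFun n (dnI j α) x‖ ^ 2)
       + (fun x => ‖∑ α ∈ idxS n N, (c α * cu j α) * hermiteFun n (upI j α) x‖ ^ 2)) x := by
      refine integral_mono_of_nonneg (Filter.Eventually.of_forall fun x => by positivity) hI
        (Filter.Eventually.of_forall fun x => ?_)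
      rw [e]
      simp only [Pi.smul_apply, Pi.add_apply, smul_eq_mul]
      generalize (∑ α ∈ idxS n N, (c α * cd j α) * hermiteFun n (dnI j α) x) = b
      generalize (∑ α ∈ idxS n N, (c α * cu j α) * hermiteFun n (upI j α) x) = a
      have t := norm_add_le b (ε * a)
      rw [norm_mul ε, hε, one_mul] at t
      rw [norm_mul]
      have : ‖(1/2:ℂ)‖ = 1/2 := by norm_num
      rw [this]
      have t2 : ‖b + ε * a‖ ^ 2 ≤ (‖b‖ + ‖a‖) ^ 2 := by gcongr
      nlinarith [sq_nonneg (‖b‖ - ‖a‖)]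
    refine h1.trans ?_
    rw [integral_const_mul, integral_add' hB.1 hA.1, hA.2, hB.2, ← Finset.sum_add_distrib,
      Finset.mul_sum, Finset.mul_sum]
    refine Finset.sum_le_sum fun α hα => ?_
    have hs := (mem_idxS α).1 hα
    have hj := Finset.single_le_sum (f := α) (fun i _ => Nat.zero_le _) (Finset.mem_univ j)
    have hN : (α j : ℝ) ≤ N := by exact_mod_cast hj.trans hs
    rw [norm_mul, norm_mul, Complex.norm_real, Complex.norm_real, mul_pow, mul_pow,
      Real.norm_eq_abs, Real.norm_eq_abs, sq_abs, sq_abs, cu, cd, Real.sq_sqrt (by positivity),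
      Real.sq_sqrt (by positivity)]
    nlinarith [sq_nonneg ‖c α‖]

lemma step_mul {n N : ℕ} (j : Fin n) {f : En n → ℂ} (hf : f ∈ hermiteSpan n N) :
    (fun x => (x j : ℂ) * f x) ∈ hermiteSpan n (N+1) ∧
    ∫ x, ‖(x j : ℂ) * f x‖ ^ 2 ≤ 2 * (N+1) * ∫ x, ‖f x‖ ^ 2 := by
  obtain ⟨c, rfl⟩ := span_rep hf
  refine step_aux j c 1 (by simp) (fun x => (x j : ℂ) * _) fun x => ?_
  simp only
  rw [Finset.mul_sum]
  refine Finset.sum_congr rfl fun α _ => ?_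
  rw [mul_left_comm, mul_hermiteFun]
  ring

lemma step_deriv {n N : ℕ} (j : Fin n) {f : En n → ℂ} (hf : f ∈ hermiteSpan n N) :
    pderiv1 j f ∈ hermiteSpan n (N+1) ∧
    ∫ x, ‖pderiv1 j f x‖ ^ 2 ≤ 2 * (N+1) * ∫ x, ‖f x‖ ^ 2 := by
  obtain ⟨c, rfl⟩ := span_rep hf
  refine step_aux j c (-1) (by simp) _ fun x => ?_
  have h : HasFDerivAt (fun x => ∑ α ∈ idxS n N, c α * hermiteFun n α x)
      (∑ α ∈ idxS n N, c α • fderiv ℝ (hermiteFun n α) x) x :=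
    HasFDerivAt.fun_sum fun α _ => ((hermiteFun_differentiable α x).hasFDerivAt).const_mul (c α)
  rw [pderiv1, h.fderiv, ContinuousLinearMap.sum_apply]
  refine Finset.sum_congr rfl fun α _ => ?_
  have := pderiv1_hermiteFun j α x
  rw [pderiv1] at this
  rw [ContinuousLinearMap.smul_apply, this, smul_eq_mul]
  ring

/-! ### Iteration -/

def bnd (N k : ℕ) : ℝ := Real.sqrt (2 ^ k * ((N + k).factorial / N.factorial))

lemma bnd_zero (N : ℕ) : bnd N 0 = 1 := by
  have : (N.factorial : ℝ) ≠ 0 := by positivity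
  simp [bnd, this]

lemma bnd_one (N : ℕ) : bnd N 1 = Real.sqrt (2 * (N + 1)) := by
  have : (N.factorial : ℝ) ≠ 0 := by positivity
  rw [bnd, Nat.factorial_succ]
  push_cast
  congr 1
  field_simp

lemma bnd_mul (N k l : ℕ) : bnd (N + k) l * bnd N k = bnd N (k + l) := by
  have : (N.factorial : ℝ) ≠ 0 := by positivity
  have : ((N + k).factorial : ℝ) ≠ 0 := by positivity
  rw [bnd, bnd, bnd, ← Real.sqrt_mul (by positivity), ← add_assoc]
  congr 1
  field_simp
  ring

def IsOp (n : ℕ) (T : (En n → ℂ) → (En n → ℂ)) (k : ℕ) : Prop :=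
  ∀ N f, f ∈ hermiteSpan n N → T f ∈ hermiteSpan n (N + k) ∧ L2norm n (T f) ≤ bnd N k * L2norm n f

lemma IsOp.one (n : ℕ) : IsOp n id 0 := fun N f hf => ⟨hf, by simp [bnd_zero]⟩

lemma IsOp.comp {n : ℕ} {T U : (En n → ℂ) → (En n → ℂ)} {k l : ℕ} (hU : IsOp n U l)
    (hT : IsOp n T k) : IsOp n (U ∘ T) (k + l) := by
  intro N f hf
  obtain ⟨h1, h2⟩ := hT N f hf
  obtain ⟨h3, h4⟩ := hU _ _ h1
  refine ⟨by rw [← add_assoc]; exact h3, h4.trans ?_⟩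
  rw [← bnd_mul, mul_assoc]
  exact mul_le_mul_of_nonneg_left h2 (Real.sqrt_nonneg _)

lemma IsOp.iterate {n : ℕ} {T : (En n → ℂ) → (En n → ℂ)} (hT : IsOp n T 1) (m : ℕ) :
    IsOp n (T^[m]) m := by
  induction m with
  | zero => exact IsOp.one n
  | succ m ih => rw [Function.iterate_succ']; exact hT.comp ih

lemma IsOp.of_step {n : ℕ} {T : (En n → ℂ) → (En n → ℂ)}
    (h : ∀ N f, f ∈ hermiteSpan n N → T f ∈ hermiteSpan n (N+1) ∧
      ∫ x, ‖T f x‖ ^ 2 ≤ 2 * (N+1) * ∫ x, ‖f x‖ ^ 2) : IsOp n T 1 := by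
  intro N f hf
  refine ⟨(h N f hf).1, ?_⟩
  rw [bnd_one, L2norm, L2norm, ← Real.sqrt_mul (by positivity)]
  exact Real.sqrt_le_sqrt (h N f hf).2

lemma IsOp.fold {n : ℕ} {T : Fin n → (En n → ℂ) → (En n → ℂ)} (hT : ∀ j, IsOp n (T j) 1)
    (β : Fin n → ℕ) (l : List (Fin n)) :
    IsOp n (fun f => l.foldr (fun j g => (T j)^[β j] g) f) (l.map β).sum := by
  induction l with
  | nil => exact IsOp.one n
  | cons j l ih =>
    have := ((hT j).iterate (β j)).comp ih
    rw [List.map_cons, List.sum_cons, add_comm]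
    exact this

lemma IsOp.foldAll {n : ℕ} {T : Fin n → (En n → ℂ) → (En n → ℂ)} (hT : ∀ j, IsOp n (T j) 1)
    (β : Fin n → ℕ) :
    IsOp n (fun f => (List.finRange n).foldr (fun j g => (T j)^[β j] g) f) (∑ j, β j) := by
  have := IsOp.fold hT β (List.finRange n)
  rwa [← List.ofFn_eq_map, List.sum_ofFn] at this

def mulX {n : ℕ} (j : Fin n) (f : En n → ℂ) : En n → ℂ := fun x => (x j : ℂ) * f x

lemma mulX_iter {n : ℕ} (j : Fin n) (m : ℕ) (f : En n → ℂ) (x : En n) :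
    (mulX j)^[m] f x = (x j : ℂ) ^ m * f x := by
  induction m with
  | zero => simp
  | succ m ih => rw [Function.iterate_succ', Function.comp, mulX, ih]; ring

lemma mulX_fold {n : ℕ} (α : Fin n → ℕ) (l : List (Fin n)) (f : En n → ℂ) (x : En n) :
    l.foldr (fun j g => (mulX j)^[α j] g) f x = (l.map fun j => (x j : ℂ) ^ α j).prod * f x := by
  induction l with
  | nil => simp
  | cons j l ih => rw [List.foldr_cons, mulX_iter, ih, List.map_cons, List.prod_cons]; ring

/-- **Estimate (gh0)**: for f ∈ E_N,
‖x^α ∂^β f‖ ≤ 2^{(|α|+|β|)/2} √((N+|α|+|β|)!/N!) ‖f‖. -/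
theorem hermite_span_monomial_deriv_estimate
    (n N : ℕ) (f : En n → ℂ) (hf : f ∈ hermiteSpan n N) (α β : Fin n → ℕ) :
    L2norm n (fun x => (monomial n α x : ℂ) * pderivMulti β f x) ≤
      (2 : ℝ) ^ (((((∑ j, α j) + (∑ j, β j) : ℕ)) : ℝ) / 2) *
        Real.sqrt (((N + (∑ j, α j) + (∑ j, β j)).factorial : ℝ) / (N.factorial : ℝ)) *
        L2norm n f := by
  have hD := (IsOp.foldAll (T := pderiv1) (fun j => IsOp.of_step fun N f hf => step_deriv j hf) β)
  have hM := (IsOp.foldAll (T := mulX) (fun j => IsOp.of_step fun N f hf => step_mul j hf) α)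
  have h := ((hM.comp hD) N f hf).2
  have e : (fun x => (monomial n α x : ℂ) * pderivMulti β f x)
      = ((fun f => (List.finRange n).foldr (fun j g => (mulX j)^[α j] g) f) ∘
        (fun f => (List.finRange n).foldr (fun j g => (pderiv1 j)^[β j] g) f)) f := by
    funext x
    simp only [Function.comp]
    rw [mulX_fold, ← List.ofFn_eq_map, List.prod_ofFn]
    simp [monomial, pderivMulti]
  rw [e]
  refine h.trans (le_of_eq ?_)
  congr 1
  rw [bnd, Real.sqrt_mul (by positivity), add_comm (∑ j, β j), ← add_assoc]
  congr 1
  rw [Real.sqrt_eq_rpow, ← Real.rpow_natCast, ← Real.rpow_mul (by norm_num)]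
  congr 1
  ring

end
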